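/- Fix an integer k ≥ 1, positive integers N, M, ν with 1 ≤ ν ≤ N−1, and positive integers μ1, m2 with μ1 + m2 = M. Let z > 0 satisfy z·f_{k−1}(z)/f_k(z) = M/N. Then for all reals x1 > 0 and x > 0: f_k( (ν·x1 + (N−ν)·x)/N )^N / ( x1^{μ1} · x^{m2} ) ≥ ( f_k(z)^N / z^M ) · (M/N)^M · (ν/μ1)^{μ1} · ((N−ν)/m2)^{m2}, with equality when x1 = (N·z/M)·(μ1/ν) and x = (N·z/M)·(m2/(N−ν)). -/

import Mathlib

/-- `fk k x = ∑_{j ≥ k} x^j / j!`, the tail of the exponential series. -/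
noncomputable def fk (k : ℕ) (x : ℝ) : ℝ := ∑' n : ℕ, x ^ (n + k) / (n + k).factorial

/-!
Write `y` for the weighted mean at which `f_k` is evaluated. The quotient factors as
`f_k(y)^N / y^M` times `y^M / (x₁^p x₂^q)`, where `M = p + q`, and the two factors are
minimized separately.
The root condition says that `z` is a critical point of `y ↦ log f_k(y) - (M/N) log y`, which is
convex in `log y` because `f_k` has nonnegative coefficients; the second factor is homogeneous of
degree zero and is bounded below by the weighted AM-GM inequality. At the proposed minimizer the
weighted mean equals `z` and AM-GM is an equality.
-/

theorem rpow_mul_one_add_sub_mul_log_le_rpow {u : ℝ} (hu : 0 < u) (a e : ℝ) :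
    u ^ a * (1 + (e - a) * Real.log u) ≤ u ^ e := by
  have htangent : 1 + (e - a) * Real.log u ≤ u ^ (e - a) := by
    rw [Real.rpow_def_of_pos hu, mul_comm (Real.log u), add_comm]
    exact Real.add_one_le_exp _
  calc u ^ a * (1 + (e - a) * Real.log u) ≤ u ^ a * u ^ (e - a) := by gcongr
    _ = u ^ e := by rw [← Real.rpow_add hu, add_sub_cancel]

-- `hmean` says that `a = z F'(z) / F(z)`, so the first-order terms of the tangent bounds cancel.
theorem div_rpow_le_div_rpow_of_hasSum {ι : Type*} {c e : ι → ℝ} {y z a Fy Fz : ℝ}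
    (hc : ∀ i, 0 ≤ c i) (hy : 0 < y) (hz : 0 < z)
    (hFy : HasSum (fun i => c i * y ^ e i) Fy) (hFz : HasSum (fun i => c i * z ^ e i) Fz)
    (hmean : HasSum (fun i => e i * (c i * z ^ e i)) (a * Fz)) :
    Fz / z ^ a ≤ Fy / y ^ a := by
  have hu : 0 < y / z := div_pos hy hz
  have hterm (i : ι) : (y / z) ^ a * (c i * z ^ e i + Real.log (y / z) *
      (e i * (c i * z ^ e i) - a * (c i * z ^ e i))) ≤ c i * y ^ e i :=
    calc _ = c i * z ^ e i * ((y / z) ^ a * (1 + (e i - a) * Real.log (y / z))) := by ring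
      _ ≤ c i * z ^ e i * (y / z) ^ e i := by
        have := hc i
        gcongr
        exact rpow_mul_one_add_sub_mul_log_le_rpow hu a (e i)
      _ = c i * y ^ e i := by
        rw [mul_assoc, ← Real.mul_rpow hz.le hu.le, mul_div_cancel₀ _ hz.ne']
  have hle : (y / z) ^ a * Fz ≤ Fy := by
    simpa only [sub_self, mul_zero, add_zero] using hasSum_le hterm
      ((hFz.add ((hmean.sub (hFz.mul_left a)).mul_left (Real.log (y / z)))).mul_left _) hFy
  rw [le_div_iff₀ (by positivity)]
  calc Fz / z ^ a * y ^ a = (y / z) ^ a * Fz := by rw [Real.div_rpow hy.le hz.le]; ring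
    _ ≤ Fy := hle

theorem hasSum_fk (k : ℕ) (x : ℝ) :
    HasSum (fun n : ℕ => x ^ (n + k) / (n + k).factorial) (fk k x) :=
  ((summable_nat_add_iff k).mpr (Real.summable_pow_div_factorial x)).hasSum

theorem fk_pos (k : ℕ) {x : ℝ} (hx : 0 < x) : 0 < fk k x :=
  (hasSum_fk k x).summable.tsum_pos (fun n => by positivity) 0 (by positivity)

theorem hasSum_cast_mul_fk_succ (k : ℕ) (x : ℝ) :
    HasSum (fun n : ℕ => ((n + (k + 1) : ℕ) : ℝ) * (x ^ (n + (k + 1)) / (n + (k + 1)).factorial))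
      (x * fk k x) := by
  have hterm (n : ℕ) : ((n + (k + 1) : ℕ) : ℝ) * (x ^ (n + (k + 1)) / (n + (k + 1)).factorial) =
      x * (x ^ (n + k) / (n + k).factorial) := by
    rw [← add_assoc, Nat.factorial_succ, pow_succ]
    push_cast
    field_simp
  simpa only [hterm] using (hasSum_fk k x).mul_left x

theorem fk_succ_div_rpow_le {k : ℕ} {y z a : ℝ} (hy : 0 < y) (hz : 0 < z)
    (hroot : z * fk k z / fk (k + 1) z = a) :
    fk (k + 1) z / z ^ a ≤ fk (k + 1) y / y ^ a := by
  have hseries (x : ℝ) : (fun n : ℕ => (1 / (n + (k + 1)).factorial : ℝ) *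
      x ^ ((n + (k + 1) : ℕ) : ℝ)) = fun n => x ^ (n + (k + 1)) / (n + (k + 1)).factorial := by
    funext n
    rw [Real.rpow_natCast, one_div_mul_eq_div]
  refine div_rpow_le_div_rpow_of_hasSum (c := fun n : ℕ => 1 / (n + (k + 1)).factorial)
    (e := fun n => ((n + (k + 1) : ℕ) : ℝ)) (fun n => by positivity) hy hz ?_ ?_ ?_
  · exact hseries y ▸ hasSum_fk (k + 1) y
  · exact hseries z ▸ hasSum_fk (k + 1) z
  · rw [← (div_eq_iff (fk_pos (k + 1) hz).ne').mp hroot]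
    simpa only [Real.rpow_natCast, one_div_mul_eq_div] using hasSum_cast_mul_fk_succ k z

theorem fk_succ_rpow_div_rpow_le {k : ℕ} {y z N M : ℝ} (hN : 0 < N) (hy : 0 < y) (hz : 0 < z)
    (hroot : z * fk k z / fk (k + 1) z = M / N) :
    fk (k + 1) z ^ N / z ^ M ≤ fk (k + 1) y ^ N / y ^ M := by
  have hpow {x : ℝ} (hx : 0 < x) :
      (fk (k + 1) x / x ^ (M / N)) ^ N = fk (k + 1) x ^ N / x ^ M := by
    rw [Real.div_rpow (fk_pos _ hx).le (by positivity), ← Real.rpow_mul hx.le,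
      div_mul_cancel₀ _ hN.ne']
  rw [← hpow hz, ← hpow hy]
  have := fk_pos (k + 1) hz
  gcongr ?_ ^ N
  exact fk_succ_div_rpow_le hy hz hroot

theorem rpow_mul_rpow_le_weighted_mean_rpow {p q s t : ℝ} (hp : 0 ≤ p) (hq : 0 ≤ q)
    (hpq : 0 < p + q) (hs : 0 ≤ s) (ht : 0 ≤ t) :
    s ^ p * t ^ q ≤ ((p * s + q * t) / (p + q)) ^ (p + q) := by
  have hamgm := Real.geom_mean_le_arith_mean Finset.univ ![p, q] ![s, t]
    (by simp [Fin.forall_fin_two, hp, hq]) (by simpa using hpq)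
    (by simp [Fin.forall_fin_two, hs, ht])
  simp only [Fin.prod_univ_two, Fin.sum_univ_two, Matrix.cons_val_zero, Matrix.cons_val_one]
    at hamgm
  exact (Real.rpow_inv_le_iff_of_pos (by positivity) (by positivity) (by positivity)).mp hamgm

section WeightedMean

variable {a b p q N : ℝ}

theorem le_weighted_mean_rpow_div {x y : ℝ} (ha : 0 < a) (hb : 0 < b) (hp : 0 < p) (hq : 0 < q)
    (hN : 0 < N) (hx : 0 < x) (hy : 0 < y) :
    ((p + q) / N) ^ (p + q) * (a / p) ^ p * (b / q) ^ q ≤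
      ((a * x + b * y) / N) ^ (p + q) / (x ^ p * y ^ q) := by
  have hamgm := rpow_mul_rpow_le_weighted_mean_rpow hp.le hq.le (add_pos hp hq)
    (s := a / p * x) (t := b / q * y) (by positivity) (by positivity)
  rw [le_div_iff₀ (by positivity)]
  calc ((p + q) / N) ^ (p + q) * (a / p) ^ p * (b / q) ^ q * (x ^ p * y ^ q)
      = ((p + q) / N) ^ (p + q) * ((a / p * x) ^ p * (b / q * y) ^ q) := by
        rw [Real.mul_rpow (by positivity) hx.le, Real.mul_rpow (by positivity) hy.le]
        ring
    _ ≤ ((p + q) / N) ^ (p + q) *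
          ((p * (a / p * x) + q * (b / q * y)) / (p + q)) ^ (p + q) := by gcongr
    _ = ((a * x + b * y) / N) ^ (p + q) := by
        rw [← Real.mul_rpow (by positivity) (by positivity)]
        field_simp

theorem weighted_mean_rpow_div_eq {t : ℝ} (ha : 0 < a) (hb : 0 < b) (hp : 0 < p) (hq : 0 < q)
    (hN : 0 < N) (ht : 0 < t) :
    ((a * (t * (p / a)) + b * (t * (q / b))) / N) ^ (p + q) /
        ((t * (p / a)) ^ p * (t * (q / b)) ^ q) =
      ((p + q) / N) ^ (p + q) * (a / p) ^ p * (b / q) ^ q := by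
  have hmean : (a * (t * (p / a)) + b * (t * (q / b))) / N = (p + q) / N * t := by field_simp
  rw [hmean, Real.mul_rpow (by positivity) ht.le, Real.mul_rpow ht.le (by positivity),
    Real.mul_rpow ht.le (by positivity), Real.rpow_add ht, ← inv_div p a, ← inv_div q b,
    Real.inv_rpow (by positivity), Real.inv_rpow (by positivity)]
  field_simp

theorem fk_two_point_minimization_general {k : ℕ} {z : ℝ} (ha : 0 < a) (hb : 0 < b) (hp : 0 < p)
    (hq : 0 < q) (hN : 0 < N) (hz : 0 < z)
    (hroot : z * fk k z / fk (k + 1) z = (p + q) / N) :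
    (∀ x y : ℝ, 0 < x → 0 < y →
      fk (k + 1) z ^ N / z ^ (p + q) * ((p + q) / N) ^ (p + q) * (a / p) ^ p * (b / q) ^ q ≤
        fk (k + 1) ((a * x + b * y) / N) ^ N / (x ^ p * y ^ q)) ∧
    fk (k + 1) ((a * (N * z / (p + q) * (p / a)) + b * (N * z / (p + q) * (q / b))) / N) ^ N /
        ((N * z / (p + q) * (p / a)) ^ p * (N * z / (p + q) * (q / b)) ^ q) =
      fk (k + 1) z ^ N / z ^ (p + q) * ((p + q) / N) ^ (p + q) * (a / p) ^ p * (b / q) ^ q := by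
  constructor
  · intro x y hx hy
    have hw : 0 < (a * x + b * y) / N := by positivity
    have hfk := fk_pos (k + 1) hw
    calc fk (k + 1) z ^ N / z ^ (p + q) * ((p + q) / N) ^ (p + q) * (a / p) ^ p * (b / q) ^ q
        = fk (k + 1) z ^ N / z ^ (p + q) *
            (((p + q) / N) ^ (p + q) * (a / p) ^ p * (b / q) ^ q) := by ring
      _ ≤ fk (k + 1) ((a * x + b * y) / N) ^ N / ((a * x + b * y) / N) ^ (p + q) *
            (((a * x + b * y) / N) ^ (p + q) / (x ^ p * y ^ q)) := by
          gcongr ?_ * ?_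
          · exact fk_succ_rpow_div_rpow_le hN hw hz hroot
          · exact le_weighted_mean_rpow_div ha hb hp hq hN hx hy
      _ = fk (k + 1) ((a * x + b * y) / N) ^ N / (x ^ p * y ^ q) :=
          div_mul_div_cancel₀ (by positivity)
  · have hmean := weighted_mean_rpow_div_eq ha hb hp hq hN (t := N * z / (p + q)) (by positivity)
    have hz' : (a * (N * z / (p + q) * (p / a)) + b * (N * z / (p + q) * (q / b))) / N = z := by
      field_simp
    rw [hz'] at hmean ⊢
    rw [mul_assoc, mul_assoc, ← mul_assoc (((p + q) / N) ^ (p + q)), ← hmean,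
      div_mul_div_cancel₀ (by positivity)]

end WeightedMean

theorem fk_two_point_minimization
    (k : ℕ) (hk : 1 ≤ k) (N M ν μ1 m2 : ℕ) (hN : 0 < N) (hM : 0 < M)
    (hν : 1 ≤ ν) (hν' : ν ≤ N - 1) (hμ1 : 0 < μ1) (hm2 : 0 < m2)
    (hsum : μ1 + m2 = M) (z : ℝ) (hz : 0 < z)
    (hroot : z * fk (k - 1) z / fk k z = (M : ℝ) / N) :
    (∀ x1 x : ℝ, 0 < x1 → 0 < x →
      fk k (((ν : ℝ) * x1 + ((N : ℝ) - ν) * x) / N) ^ N / (x1 ^ μ1 * x ^ m2) ≥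
        fk k z ^ N / z ^ M * ((M : ℝ) / N) ^ M * ((ν : ℝ) / μ1) ^ μ1 *
          (((N : ℝ) - ν) / m2) ^ m2) ∧
    fk k (((ν : ℝ) * ((N : ℝ) * z / M * ((μ1 : ℝ) / ν)) +
            ((N : ℝ) - ν) * ((N : ℝ) * z / M * ((m2 : ℝ) / ((N : ℝ) - ν)))) / N) ^ N /
        (((N : ℝ) * z / M * ((μ1 : ℝ) / ν)) ^ μ1 *
          ((N : ℝ) * z / M * ((m2 : ℝ) / ((N : ℝ) - ν))) ^ m2) =
      fk k z ^ N / z ^ M * ((M : ℝ) / N) ^ M * ((ν : ℝ) / μ1) ^ μ1 *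
        (((N : ℝ) - ν) / m2) ^ m2 := by
  obtain ⟨k, rfl⟩ := Nat.exists_eq_add_of_le' hk
  subst hsum
  have hνN : (0 : ℝ) < N - ν := sub_pos.mpr (by exact_mod_cast (by omega : ν < N))
  push_cast at hroot
  simpa only [← Nat.cast_add, Real.rpow_natCast] using
    fk_two_point_minimization_general (Nat.cast_pos.mpr hν) hνN (Nat.cast_pos.mpr hμ1)
      (Nat.cast_pos.mpr hm2) (Nat.cast_pos.mpr hN) hz hroot
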